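/- Let G be a connected graph with at least 3 vertices and at least 3 edges. Then κ_3(L(G)) ≥ λ_3(G). -/

import Mathlib

open SimpleGraph

variable {V : Type*}

/-- `T` is an `S`-Steiner tree in `G`: a subgraph of `G` that is a tree containing `S`. -/
def IsSteinerTree (G : SimpleGraph V) (S : Set V) (T : G.Subgraph) : Prop :=
  T.coe.IsTree ∧ S ⊆ T.verts

/-- There exist `n` pairwise edge-disjoint `S`-Steiner trees in `G`. -/
def EdgeDisjointPacking (G : SimpleGraph V) (S : Set V) (n : ℕ) : Prop :=
  ∃ F : Fin n → G.Subgraph, (∀ i, IsSteinerTree G S (F i)) ∧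
    ∀ i j, i ≠ j → Disjoint (F i).edgeSet (F j).edgeSet

/-- There exist `n` pairwise internally disjoint `S`-Steiner trees in `G`. -/
def InternallyDisjointPacking (G : SimpleGraph V) (S : Set V) (n : ℕ) : Prop :=
  ∃ F : Fin n → G.Subgraph, (∀ i, IsSteinerTree G S (F i)) ∧
    ∀ i j, i ≠ j →
      Disjoint (F i).edgeSet (F j).edgeSet ∧ (F i).verts ∩ (F j).verts = S

/-- `λ_G(S)`: the maximum number of pairwise edge-disjoint `S`-Steiner trees. -/
noncomputable def steinerLambda (G : SimpleGraph V) (S : Set V) : ℕ :=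
  sSup {n | EdgeDisjointPacking G S n}

/-- `κ_G(S)`: the maximum number of pairwise internally disjoint `S`-Steiner trees. -/
noncomputable def steinerKappa (G : SimpleGraph V) (S : Set V) : ℕ :=
  sSup {n | InternallyDisjointPacking G S n}

/-- `λ_k(G)`: the `k`-tree edge-connectivity of `G`. -/
noncomputable def treeEdgeConn (G : SimpleGraph V) (k : ℕ) : ℕ :=
  sInf {m | ∃ S : Set V, S.ncard = k ∧ m = steinerLambda G S}

/-- `κ_k(G)`: the `k`-tree connectivity of `G`. -/
noncomputable def treeConn (G : SimpleGraph V) (k : ℕ) : ℕ :=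
  sInf {m | ∃ S : Set V, S.ncard = k ∧ m = steinerKappa G S}

/-!
A set `S` of at most four edges of `G` has a system of distinct representatives `u`: by Hall's
theorem this only fails if some of the edges outnumber their endpoints, but `n` vertices span at
most `n.choose 2` edges. A `u(S)`-Steiner tree `T` of `G` then yields a connected subgraph of
`L(G)` through `S`: the edges of `T` are connected among themselves because `T` is, and every
`e ∈ S` outside `T` meets some edge of `T` in `u e`. Edge-disjoint trees yield subgraphs whose
vertex sets meet only in `S`. They share no edge either: such an edge would join some `e, f ∈ S`
with `u e ∈ f` and `u f ∈ e`, so both `e` and `f` would be the pair `{u e, u f}`.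
Spanning trees of these subgraphs are the required Steiner trees.
-/

section Subgraphs

variable {G : SimpleGraph V}

lemma exists_isTree_subgraph_of_connected {H : G.Subgraph} (hH : H.Connected) :
    ∃ T ≤ H, T.verts = H.verts ∧ T.coe.IsTree := by
  obtain ⟨T, hTH, hT⟩ := hH.coe.exists_isTree_le
  let K : G.Subgraph :=
    { verts := H.verts
      Adj := Relation.Map T.Adj (↑) (↑)
      adj_sub := by
        rintro _ _ ⟨a, b, hab, rfl, rfl⟩
        exact (hTH hab).adj_sub
      edge_vert := by
        rintro _ _ ⟨a, _, _, rfl, rfl⟩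
        exact a.2
      symm := ⟨by
        rintro _ _ ⟨a, b, hab, rfl, rfl⟩
        exact ⟨b, a, hab.symm, rfl, rfl⟩⟩ }
  have hK : K.coe = T := by
    ext a b
    exact Relation.map_apply_apply Subtype.val_injective Subtype.val_injective T.Adj a b
  refine ⟨K, ⟨le_rfl, ?_⟩, rfl, hK ▸ hT⟩
  rintro _ _ ⟨a, b, hab, rfl, rfl⟩
  exact hTH hab

lemma connected_of_le_of_forall_exists_adj {H K : G.Subgraph} (hH : H.Connected) (hHK : H ≤ K)
    (hadj : ∀ v ∈ K.verts, v ∉ H.verts → ∃ w ∈ H.verts, K.Adj v w) : K.Connected := by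
  have hreach (v : K.verts) :
      ∃ w : H.verts, K.coe.Reachable v (Subgraph.inclusion hHK w) := by
    by_cases hv : v.1 ∈ H.verts
    · exact ⟨⟨v, hv⟩, .rfl⟩
    · obtain ⟨w, hw, hvw⟩ := hadj v v.2 hv
      exact ⟨⟨w, hw⟩, Adj.reachable hvw⟩
  obtain ⟨x, hx⟩ := hH.nonempty
  have : Nonempty K.verts := ⟨⟨x, hHK.1 hx⟩⟩
  refine ⟨⟨fun v w ↦ ?_⟩⟩
  obtain ⟨v', hv⟩ := hreach v
  obtain ⟨w', hw⟩ := hreach w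
  exact hv.trans (((hH v' w').map (Subgraph.inclusion hHK)).trans hw.symm)

end Subgraphs

section Packings

variable {G : SimpleGraph V} {S : Set V} {n : ℕ}

lemma InternallyDisjointPacking.edgeDisjointPacking (h : InternallyDisjointPacking G S n) :
    EdgeDisjointPacking G S n :=
  let ⟨F, hF, hdisj⟩ := h
  ⟨F, hF, fun i j hij ↦ (hdisj i j hij).1⟩

lemma internallyDisjointPacking_of_connected (F : Fin n → G.Subgraph)
    (hconn : ∀ i, (F i).Connected) (hS : ∀ i, S ⊆ (F i).verts)
    (hdisj : ∀ i j, i ≠ j →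
      Disjoint (F i).edgeSet (F j).edgeSet ∧ (F i).verts ∩ (F j).verts = S) :
    InternallyDisjointPacking G S n := by
  choose T hTF hverts hT using fun i ↦ exists_isTree_subgraph_of_connected (hconn i)
  refine ⟨T, fun i ↦ ⟨hT i, (hverts i).symm ▸ hS i⟩, fun i j hij ↦ ⟨?_, ?_⟩⟩
  · exact (hdisj i j hij).1.mono (Subgraph.edgeSet_mono (hTF i)) (Subgraph.edgeSet_mono (hTF j))
  · rw [hverts, hverts, (hdisj i j hij).2]

lemma EdgeDisjointPacking.le_degree (h : EdgeDisjointPacking G S n) (hS : S.Nontrivial)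
    {v : V} (hv : v ∈ S) [Fintype (G.neighborSet v)] : n ≤ G.degree v := by
  obtain ⟨F, hF, hdisj⟩ := h
  have hadj (i : Fin n) : ∃ w, (F i).Adj v w := by
    have : Nontrivial (F i).verts := (hS.mono (hF i).2).coe_sort
    obtain ⟨w, hw⟩ := (hF i).1.connected.preconnected.exists_adj_of_nontrivial ⟨v, (hF i).2 hv⟩
    exact ⟨w, hw⟩
  choose w hw using hadj
  have hinj : Function.Injective fun i ↦ (⟨w i, (hw i).adj_sub⟩ : G.neighborSet v) := by
    intro i j hij
    have hwij : w i = w j := congrArg Subtype.val hij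
    by_contra hne
    exact Set.disjoint_left.mp (hdisj i j hne) (Subgraph.mem_edgeSet.mpr (hw i))
      (Subgraph.mem_edgeSet.mpr (hwij ▸ hw j))
  simpa only [Fintype.card_fin, card_neighborSet_eq_degree] using
    Fintype.card_le_of_injective _ hinj

lemma bddAbove_internallyDisjointPacking [G.LocallyFinite] (hS : S.Nontrivial) :
    BddAbove {n | InternallyDisjointPacking G S n} := by
  obtain ⟨v, hv⟩ := hS.nonempty
  exact ⟨G.degree v, fun _ h ↦ h.edgeDisjointPacking.le_degree hS hv⟩

end Packings

lemma treeEdgeConn_le_steinerLambda (G : SimpleGraph V) (S : Set V) :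
    treeEdgeConn G S.ncard ≤ steinerLambda G S :=
  Nat.sInf_le ⟨S, rfl, rfl⟩

lemma le_treeConn {G : SimpleGraph V} {k m : ℕ} (hk : k ≤ ENat.card V)
    (h : ∀ S : Set V, S.ncard = k → m ≤ steinerKappa G S) : m ≤ treeConn G k := by
  obtain ⟨S₀, -, hS₀⟩ := Set.exists_subset_encard_eq (hk.trans_eq (Set.encard_univ V).symm)
  refine le_csInf ⟨_, S₀, congrArg ENat.toNat hS₀, rfl⟩ ?_
  rintro _ ⟨S, hS, rfl⟩
  exact h S hS

section DistinctEndpoints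

variable {G : SimpleGraph V}

lemma card_le_choose_two_of_endpoints_subset {A : Finset G.edgeSet} {U : Finset V}
    (hU : ∀ e ∈ A, ∀ v ∈ e.1, v ∈ U) : A.card ≤ U.card.choose 2 := by
  classical
  rw [← Sym2.card_image_offDiag, ← Finset.card_map (Function.Embedding.subtype _)]
  refine Finset.card_le_card fun e he ↦ ?_
  obtain ⟨⟨e, heG⟩, heA, rfl⟩ := Finset.mem_map.mp he
  induction e with | _ a b
  exact Finset.mem_image.mpr ⟨(a, b), Finset.mem_offDiag.mpr ⟨hU _ heA a (Sym2.mem_mk_left a b),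
    hU _ heA b (Sym2.mem_mk_right a b), G.ne_of_adj heG⟩, rfl⟩

lemma card_le_card_of_endpoints_subset {A : Finset G.edgeSet} {U : Finset V} (hA : A.card ≤ 4)
    (hU : ∀ e ∈ A, ∀ v ∈ e.1, v ∈ U) : A.card ≤ U.card := by
  by_contra! hlt
  have hchoose : A.card ≤ U.card.choose 2 := card_le_choose_two_of_endpoints_subset hU
  have hU_le : U.card ≤ 3 := by omega
  have hchoose_le : U.card.choose 2 ≤ U.card := by
    interval_cases U.card <;> decide
  omega

lemma exists_injOn_endpoint {S : Set G.edgeSet} (hS : S.encard ≤ 4) :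
    ∃ u : G.edgeSet → V, (∀ e, u e ∈ e.1) ∧ Set.InjOn u S := by
  classical
  have hall (A : Finset S) : A.card ≤ (A.biUnion fun e ↦ e.1.1.toFinset).card := by
    rw [← Finset.card_map (Function.Embedding.subtype _)]
    refine card_le_card_of_endpoints_subset ?_ fun e he v hv ↦ ?_
    · have hAS : (A.map (Function.Embedding.subtype (· ∈ S)) : Set G.edgeSet) ⊆ S := by
        simp
      exact_mod_cast Set.encard_coe_eq_coe_finsetCard _ ▸ (Set.encard_le_encard hAS).trans hS
    · obtain ⟨e, heA, rfl⟩ := Finset.mem_map.mp he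
      exact Finset.mem_biUnion.mpr ⟨e, heA, Sym2.mem_toFinset.mpr hv⟩
  obtain ⟨f, hf, hmem⟩ := (Finset.all_card_le_biUnion_card_iff_exists_injective _).mp hall
  refine ⟨fun e ↦ if he : e ∈ S then f ⟨e, he⟩ else e.1.out.1, fun e ↦ ?_, ?_⟩
  · dsimp only
    split_ifs with he
    · exact Sym2.mem_toFinset.mp (hmem ⟨e, he⟩)
    · exact e.1.out_fst_mem
  · rw [Set.injOn_iff_injective]
    convert hf using 1
    exact funext fun e ↦ dif_pos e.2

end DistinctEndpoints

section LineGraph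

variable {G : SimpleGraph V}

lemma finite_neighborSet_lineGraph [G.LocallyFinite] (e : G.edgeSet) :
    (G.lineGraph.neighborSet e).Finite := by
  classical
  have hfin : (⋃ v ∈ e.1.toFinset, G.incidenceSet v).Finite :=
    e.1.toFinset.finite_toSet.biUnion fun v _ ↦ Set.toFinite _
  refine (hfin.preimage Subtype.val_injective.injOn).subset fun f hef ↦ ?_
  obtain ⟨-, v, hve, hvf⟩ := lineGraph_adj_iff_exists.mp hef
  exact Set.mem_biUnion (Sym2.mem_toFinset.mpr hve) ⟨f.2, hvf⟩

lemma exists_mem_edgeSet_of_mem_verts {T : G.Subgraph} (hT : T.Connected)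
    (hnt : T.verts.Nontrivial) {x : V} (hx : x ∈ T.verts) :
    ∃ e : G.edgeSet, e.1 ∈ T.edgeSet ∧ x ∈ e.1 := by
  have : Nontrivial T.verts := hnt.coe_sort
  obtain ⟨y, hxy⟩ := hT.preconnected.exists_adj_of_nontrivial ⟨x, hx⟩
  exact ⟨⟨s(x, y), hxy.adj_sub⟩, hxy, Sym2.mem_mk_left x y⟩

lemma reachable_induce_lineGraph_of_common_endpoint {s : Set G.edgeSet} {e f : s} {x : V}
    (he : x ∈ e.1.1) (hf : x ∈ f.1.1) : (G.lineGraph.induce s).Reachable e f := by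
  obtain rfl | hef := eq_or_ne e f
  · rfl
  · exact Adj.reachable (lineGraph_adj_iff_exists.mpr ⟨Subtype.coe_ne_coe.mpr hef, x, he, hf⟩)

lemma reachable_induce_lineGraph_of_walk {T : G.Subgraph} {x y : T.verts} (p : T.coe.Walk x y)
    {e f : {e : G.edgeSet | e.1 ∈ T.edgeSet}} (he : x.1 ∈ e.1.1) (hf : y.1 ∈ f.1.1) :
    (G.lineGraph.induce {e | e.1 ∈ T.edgeSet}).Reachable e f := by
  induction p generalizing e with
  | nil => exact reachable_induce_lineGraph_of_common_endpoint he hf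
  | @cons x z y hxz _ ih =>
    have hT : T.Adj x z := hxz
    let g : {e : G.edgeSet | e.1 ∈ T.edgeSet} := ⟨⟨s(x.1, z.1), hT.adj_sub⟩, hT⟩
    exact (reachable_induce_lineGraph_of_common_endpoint (f := g) he
      (Sym2.mem_mk_left x.1 z.1)).trans (ih (Sym2.mem_mk_right x.1 z.1) hf)

lemma connected_induce_lineGraph {T : G.Subgraph} (hT : T.Connected) (hnt : T.verts.Nontrivial) :
    (G.lineGraph.induce {e | e.1 ∈ T.edgeSet}).Connected := by
  have hend (e : {e : G.edgeSet | e.1 ∈ T.edgeSet}) : ∃ x : T.verts, x.1 ∈ e.1.1 :=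
    ⟨⟨_, T.mem_verts_of_mem_edge e.2 e.1.1.out_fst_mem⟩, e.1.1.out_fst_mem⟩
  obtain ⟨x, hx⟩ := hnt.nonempty
  obtain ⟨e₀, he₀, -⟩ := exists_mem_edgeSet_of_mem_verts hT hnt hx
  have : Nonempty {e : G.edgeSet | e.1 ∈ T.edgeSet} := ⟨⟨e₀, he₀⟩⟩
  refine ⟨fun e f ↦ ?_⟩
  obtain ⟨x, hxe⟩ := hend e
  obtain ⟨y, hyf⟩ := hend f
  obtain ⟨p⟩ := hT x y
  exact reachable_induce_lineGraph_of_walk p hxe hyf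

/-- The subgraph of the line graph of `G` into which a Steiner tree `T` of `G` is turned: its
vertices are the edges of `T` and the edges in `S`. All adjacencies between edges of `T` are kept,
while `f ∈ S` is joined to those edges of `T` that contain its chosen endpoint `u f`. -/
def lineSubgraph (T : G.Subgraph) (S : Set G.edgeSet) (u : G.edgeSet → V) :
    G.lineGraph.Subgraph where
  verts := {e | e.1 ∈ T.edgeSet} ∪ S
  Adj e f := G.lineGraph.Adj e f ∧
    (e.1 ∈ T.edgeSet ∧ (f.1 ∈ T.edgeSet ∨ f ∈ S ∧ u f ∈ e.1) ∨
      f.1 ∈ T.edgeSet ∧ (e.1 ∈ T.edgeSet ∨ e ∈ S ∧ u e ∈ f.1))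
  adj_sub h := h.1
  edge_vert h := h.2.elim (fun h ↦ Or.inl h.1) fun h ↦ h.2.imp_right And.left
  symm := ⟨fun _ _ h ↦ ⟨h.1.symm, h.2.symm⟩⟩

variable {S : Set G.edgeSet} {u : G.edgeSet → V}

lemma connected_lineSubgraph {T : G.Subgraph} (hT : T.Connected) (hnt : T.verts.Nontrivial)
    (hu : ∀ e, u e ∈ e.1) (huT : u '' S ⊆ T.verts) : (lineSubgraph T S u).Connected := by
  have hle : (⊤ : G.lineGraph.Subgraph).induce {e | e.1 ∈ T.edgeSet} ≤ lineSubgraph T S u :=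
    ⟨Set.subset_union_left, fun _ _ h ↦ ⟨h.2.2, Or.inl ⟨h.1, Or.inl h.2.1⟩⟩⟩
  refine connected_of_le_of_forall_exists_adj
    (connected_induce_iff.mp (connected_induce_lineGraph hT hnt)) hle fun e he heT ↦ ?_
  have heS : e ∈ S := he.resolve_left heT
  obtain ⟨f, hfT, huf⟩ := exists_mem_edgeSet_of_mem_verts hT hnt (huT ⟨e, heS, rfl⟩)
  have hef : e ≠ f := fun h ↦ heT (h ▸ hfT)
  exact ⟨f, hfT, lineGraph_adj_iff_exists.mpr ⟨hef, u e, hu e, huf⟩,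
    Or.inr ⟨hfT, Or.inr ⟨heS, huf⟩⟩⟩

lemma verts_lineSubgraph_inter {T T' : G.Subgraph} (hTT' : Disjoint T.edgeSet T'.edgeSet) :
    (lineSubgraph T S u).verts ∩ (lineSubgraph T' S u).verts = S := by
  have hdisj : Disjoint {e : G.edgeSet | e.1 ∈ T.edgeSet} {e | e.1 ∈ T'.edgeSet} :=
    hTT'.preimage Subtype.val
  simp only [lineSubgraph, ← Set.inter_union_distrib_right, hdisj.inter_eq, Set.empty_union]

lemma eq_of_mem_of_endpoint_mem (hu : ∀ e, u e ∈ e.1) (hinj : Set.InjOn u S) {e f : G.edgeSet}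
    (he : e ∈ S) (hf : f ∈ S) (hef : u e ∈ f.1) (hfe : u f ∈ e.1) : e = f := by
  by_contra hne
  have hue : u e ≠ u f := hinj.ne he hf hne
  exact hne (Subtype.ext (((Sym2.mem_and_mem_iff hue).mp ⟨hu e, hfe⟩).trans
    ((Sym2.mem_and_mem_iff hue).mp ⟨hef, hu f⟩).symm))

lemma disjoint_edgeSet_lineSubgraph {T T' : G.Subgraph} (hu : ∀ e, u e ∈ e.1)
    (hinj : Set.InjOn u S) (hTT' : Disjoint T.edgeSet T'.edgeSet) :
    Disjoint (lineSubgraph T S u).edgeSet (lineSubgraph T' S u).edgeSet := by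
  refine Set.disjoint_left.mpr fun p ↦ ?_
  induction p with | _ e f
  rintro ⟨hef, h⟩ ⟨-, h'⟩
  have he : e.1 ∈ T.edgeSet → e.1 ∉ T'.edgeSet := fun h ↦ Set.disjoint_left.mp hTT' h
  have hf : f.1 ∈ T.edgeSet → f.1 ∉ T'.edgeSet := fun h ↦ Set.disjoint_left.mp hTT' h
  have hS : ¬((e ∈ S ∧ u e ∈ f.1) ∧ f ∈ S ∧ u f ∈ e.1) := fun ⟨⟨heS, hue⟩, hfS, huf⟩ ↦
    hef.ne (eq_of_mem_of_endpoint_mem hu hinj heS hfS hue huf)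
  tauto

end LineGraph

section Comparison

variable {G : SimpleGraph V} {S : Set G.edgeSet} {u : G.edgeSet → V}

lemma EdgeDisjointPacking.internallyDisjointPacking_lineGraph {n : ℕ} (hS : S.Nontrivial)
    (hu : ∀ e, u e ∈ e.1) (hinj : Set.InjOn u S) (h : EdgeDisjointPacking G (u '' S) n) :
    InternallyDisjointPacking G.lineGraph S n := by
  obtain ⟨F, hF, hdisj⟩ := h
  refine internallyDisjointPacking_of_connected (fun i ↦ lineSubgraph (F i) S u) (fun i ↦ ?_)
    (fun i ↦ Set.subset_union_right) fun i j hij ↦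
      ⟨disjoint_edgeSet_lineSubgraph hu hinj (hdisj i j hij),
        verts_lineSubgraph_inter (hdisj i j hij)⟩
  exact connected_lineSubgraph ⟨(hF i).1.connected⟩ ((hS.image_of_injOn hinj).mono (hF i).2) hu
    (hF i).2

lemma steinerLambda_image_le_steinerKappa_lineGraph [G.LocallyFinite] (hS : S.Nontrivial)
    (hu : ∀ e, u e ∈ e.1) (hinj : Set.InjOn u S) :
    steinerLambda G (u '' S) ≤ steinerKappa G.lineGraph S := by
  have : G.lineGraph.LocallyFinite := fun e ↦ (finite_neighborSet_lineGraph e).fintype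
  exact csSup_le_csSup' (bddAbove_internallyDisjointPacking hS) fun _ h ↦
    h.internallyDisjointPacking_lineGraph hS hu hinj

end Comparison

theorem treeConn_three_lineGraph_ge_treeEdgeConn_three_general (G : SimpleGraph V)
    [G.LocallyFinite] {k : ℕ} (hk₂ : 2 ≤ k) (hk₄ : k ≤ 4) (he : k ≤ G.edgeSet.encard) :
    treeEdgeConn G k ≤ treeConn G.lineGraph k := by
  refine le_treeConn he fun S hS ↦ ?_
  subst hS
  obtain ⟨hnt, hfin⟩ := Set.one_lt_ncard_iff_nontrivial_and_finite.mp hk₂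
  have hcard : S.encard ≤ 4 := by
    rw [← hfin.cast_ncard_eq]
    exact_mod_cast hk₄
  obtain ⟨u, hu, hinj⟩ := exists_injOn_endpoint hcard
  calc treeEdgeConn G S.ncard
    _ = treeEdgeConn G (u '' S).ncard := by rw [hinj.ncard_image]
    _ ≤ steinerLambda G (u '' S) := treeEdgeConn_le_steinerLambda G _
    _ ≤ steinerKappa G.lineGraph S := steinerLambda_image_le_steinerKappa_lineGraph hnt hu hinj

/-- If `G` is connected with at least `3` vertices and at least `3` edges,
then `κ_3(L(G)) ≥ λ_3(G)`. -/
theorem treeConn_three_lineGraph_ge_treeEdgeConn_three [Fintype V] (G : SimpleGraph V)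
    (hG : G.Connected) (hv : 3 ≤ Fintype.card V) (he : 3 ≤ G.edgeSet.ncard) :
    treeEdgeConn G 3 ≤ treeConn G.lineGraph 3 := by
  classical
  refine treeConn_three_lineGraph_ge_treeEdgeConn_three_general G (by norm_num) (by norm_num) ?_
  rwa [← G.edgeSet.toFinite.cast_ncard_eq, Nat.cast_le]
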